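/- Let x^{(n)} : ℝ^d → ℝ^k satisfy the CCP recursion x^{(n)}(z) = (Wₙᵀ z + 1) ⊙ x^{(n-1)}(z), and write w = w_{[n]:i} for the i-th column of Wₙ. Fix a box [l, u] ⊂ ℝ^d, reals lδ ≤ uδ, and suppose: (i) z ∈ [l, u] and δ ∈ [lδ, uδ]; (ii) Lg, Ug ∈ ℝ^d satisfy Lg ≤ δ·∇x_i^{(n-1)}(z) ≤ Ug entrywise; (iii) LH, UH ∈ ℝ^{d×d} satisfy LH ≤ δ'·∇²x_i^{(n-1)}(z) ≤ UH entrywise, where δ' = δ·(wᵀz + 1). Then, entrywise, Lg (w⁺)ᵀ + Ug (w⁻)ᵀ + w⁺ Lgᵀ + w⁻ Ugᵀ + LH ≤ δ·∇²x_i^{(n)}(z) ≤ Ug (w⁺)ᵀ + Lg (w⁻)ᵀ + w⁺ Ugᵀ + w⁻ Lgᵀ + UH, where ∇²x_i^{(n)}(z) = ∇x_i^{(n-1)}(z)wᵀ + w(∇x_i^{(n-1)}(z))ᵀ + (wᵀz+1)∇²x_i^{(n-1)}(z) is the Hessian of the i-th coordinate at layer n. -/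

import Mathlib

/-!
On `ℝ^d` put `a(z) = wᵀz + 1`, so that `x_i^{(n)} = a · x_i^{(n-1)}` with `∇a = w` constant and
`∇²a = 0`. As `x_i^{(n-1)}` is a polynomial, hence smooth, the product rule applied twice gives
`∇²(a f) = ∇f wᵀ + w ∇fᵀ + a ∇²f` (`hessAt_affine_mul`). After multiplication by `δ`, each entry is
a sum of products of an interval-bounded quantity with a weight of known value, and splitting that
weight into its positive and negative parts bounds each product (`mul_posneg_bounds`).
-/

/-- The hidden states of a CCP polynomial network with weight matrices `W n ∈ ℝ^{d×k}`:
`x^{(1)}(z) = W₁ᵀ z` and `x^{(n)}(z) = (Wₙᵀ z + 1) ⊙ x^{(n-1)}(z)` componentwise. -/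
noncomputable def ccpX (d k : ℕ) (W : ℕ → Matrix (Fin d) (Fin k) ℝ) :
    ℕ → (Fin d → ℝ) → Fin k → ℝ
  | 0, _, _ => 0
  | 1, z, i => ∑ j, W 1 j i * z j
  | n + 2, z, i => ((∑ j, W (n + 2) j i * z j) + 1) * ccpX d k W (n + 1) z i

/-- The directional partial derivative `∂f/∂z_j` of `f : ℝ^d → ℝ` at `z`. -/
noncomputable def gradAt {d : ℕ} (f : (Fin d → ℝ) → ℝ) (z : Fin d → ℝ) (j : Fin d) : ℝ :=
  fderiv ℝ f z (Pi.single j 1)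

/-- The Hessian entry `(j, j')` of `f : ℝ^d → ℝ` at `z`. -/
noncomputable def hessAt {d : ℕ} (f : (Fin d → ℝ) → ℝ) (z : Fin d → ℝ) (j j' : Fin d) : ℝ :=
  fderiv ℝ (fun w => fderiv ℝ f w (Pi.single j' 1)) z (Pi.single j 1)

theorem contDiff_ccpX (d k : ℕ) (W : ℕ → Matrix (Fin d) (Fin k) ℝ) (i : Fin k) (n : ℕ) :
    ContDiff ℝ 2 (fun z => ccpX d k W (n + 1) z i) := by
  induction n with
  | zero =>
    simp only [ccpX]
    fun_prop
  | succ n ih =>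
    simp only [ccpX]
    fun_prop

theorem hasFDerivAt_affine {d : ℕ} (w : Fin d → ℝ) (z : Fin d → ℝ) :
    HasFDerivAt (fun z : Fin d → ℝ => (∑ j, w j * z j) + 1)
      (∑ j, w j • (ContinuousLinearMap.proj j : (Fin d → ℝ) →L[ℝ] ℝ)) z := by
  refine HasFDerivAt.add_const _ ?_
  refine HasFDerivAt.fun_sum fun j _ => ?_
  exact (hasFDerivAt_apply j z).const_mul (w j)

theorem fderiv_affine_mul_single {d : ℕ} (w : Fin d → ℝ) {f : (Fin d → ℝ) → ℝ} (z : Fin d → ℝ)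
    (hf : DifferentiableAt ℝ f z) (j : Fin d) :
    fderiv ℝ (fun z => ((∑ j, w j * z j) + 1) * f z) z (Pi.single j 1) =
      ((∑ j, w j * z j) + 1) * fderiv ℝ f z (Pi.single j 1) + f z * w j := by
  rw [((hasFDerivAt_affine w z).fun_mul hf.hasFDerivAt).fderiv]
  simp [Pi.single_apply]

/-- The Hessian of `(wᵀz + 1) f(z)` is `∇f wᵀ + w ∇fᵀ + (wᵀz + 1) ∇²f`. -/
theorem hessAt_affine_mul {d : ℕ} (w : Fin d → ℝ) {f : (Fin d → ℝ) → ℝ} (hf : ContDiff ℝ 2 f)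
    (z : Fin d → ℝ) (j j' : Fin d) :
    hessAt (fun z => ((∑ j, w j * z j) + 1) * f z) z j j' =
      gradAt f z j * w j' + w j * gradAt f z j' + ((∑ j, w j * z j) + 1) * hessAt f z j j' := by
  have hd : Differentiable ℝ f := hf.differentiable (by norm_num)
  have hd' : Differentiable ℝ (fun z => fderiv ℝ f z (Pi.single j' 1)) :=
    ((hf.fderiv_right (m := 1) (by norm_num)).differentiable (by norm_num)).clm_apply
      (differentiable_const _)
  unfold hessAt gradAt
  simp_rw [fun z => fderiv_affine_mul_single w z (hd z) j']
  have hprod : DifferentiableAt ℝ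
      (fun z => ((∑ j, w j * z j) + 1) * fderiv ℝ f z (Pi.single j' 1)) z :=
    (hasFDerivAt_affine w z).differentiableAt.mul (hd' z)
  rw [fderiv_fun_add hprod ((hd z).mul_const _), add_apply,
    fderiv_affine_mul_single w z (hd' z) j, fderiv_mul_const (hd z)]
  simp only [smul_apply, smul_eq_mul]
  ring

/-- Interval arithmetic for a product with a weight `w = w⁺ + w⁻`, where `w⁺ ≥ 0 ≥ w⁻`. -/
theorem mul_posneg_bounds {L g U : ℝ} (w : ℝ) (hL : L ≤ g) (hU : g ≤ U) :
    L * max w 0 + U * min w 0 ≤ g * w ∧ g * w ≤ U * max w 0 + L * min w 0 := by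
  rcases le_total w 0 with h | h
  · simp only [max_eq_right h, min_eq_left h]
    constructor <;> nlinarith
  · simp only [max_eq_left h, min_eq_right h]
    constructor <;> nlinarith

/-- Proposition 1, interval bounds on the weighted layer Hessian:  consider a
CCP layer `n ≥ 2` (encoded as `n + 2`) with `w = w_{[n]:i}` the `i`-th column of `Wₙ`.
Suppose `z ∈ [l, u]`, `δ ∈ [lδ, uδ]`, `Lg ≤ δ·∇x_i^{(n-1)}(z) ≤ Ug` entrywise, and
`LH ≤ δ'·∇²x_i^{(n-1)}(z) ≤ UH` entrywise where `δ' = δ·(wᵀz + 1)`.  Then, entrywise,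
`Lg (w⁺)ᵀ + Ug (w⁻)ᵀ + w⁺ Lgᵀ + w⁻ Ugᵀ + LH ≤ δ·∇²x_i^{(n)}(z)
  ≤ Ug (w⁺)ᵀ + Lg (w⁻)ᵀ + w⁺ Ugᵀ + w⁻ Lgᵀ + UH`. -/
theorem ccp_weighted_hessian_interval_bounds (d k : ℕ)
    (W : ℕ → Matrix (Fin d) (Fin k) ℝ) (n : ℕ) (i : Fin k)
    (l u z : Fin d → ℝ) (hz : ∀ j, l j ≤ z j ∧ z j ≤ u j)
    (δ lδ uδ : ℝ) (hδ : lδ ≤ δ ∧ δ ≤ uδ)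
    (Lg Ug : Fin d → ℝ)
    (hg : ∀ j, Lg j ≤ δ * gradAt (fun w => ccpX d k W (n + 1) w i) z j ∧
      δ * gradAt (fun w => ccpX d k W (n + 1) w i) z j ≤ Ug j)
    (LH UH : Fin d → Fin d → ℝ)
    (hH : ∀ j j',
      LH j j' ≤ (δ * ((∑ j'', W (n + 2) j'' i * z j'') + 1)) *
          hessAt (fun w => ccpX d k W (n + 1) w i) z j j' ∧
      (δ * ((∑ j'', W (n + 2) j'' i * z j'') + 1)) *
          hessAt (fun w => ccpX d k W (n + 1) w i) z j j' ≤ UH j j') :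
    ∀ j j',
      Lg j * max (W (n + 2) j' i) 0 + Ug j * min (W (n + 2) j' i) 0 +
        max (W (n + 2) j i) 0 * Lg j' + min (W (n + 2) j i) 0 * Ug j' + LH j j' ≤
        δ * hessAt (fun w => ccpX d k W (n + 2) w i) z j j' ∧
      δ * hessAt (fun w => ccpX d k W (n + 2) w i) z j j' ≤
        Ug j * max (W (n + 2) j' i) 0 + Lg j * min (W (n + 2) j' i) 0 +
          max (W (n + 2) j i) 0 * Ug j' + min (W (n + 2) j i) 0 * Lg j' + UH j j' := by
  intro j j'
  have hrec : (fun w => ccpX d k W (n + 2) w i) = fun z =>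
      ((∑ j, W (n + 2) j i * z j) + 1) * (fun w => ccpX d k W (n + 1) w i) z := by
    funext z
    simp only [ccpX]
  have hhess := hessAt_affine_mul (fun j => W (n + 2) j i) (contDiff_ccpX d k W i n) z j j'
  rw [hrec, hhess]
  have h₁ := mul_posneg_bounds (W (n + 2) j' i) (hg j).1 (hg j).2
  have h₂ := mul_posneg_bounds (W (n + 2) j i) (hg j').1 (hg j').2
  have h₃ := hH j j'
  constructor
  · linarith [h₁.1, h₂.1, h₃.1]
  · linarith [h₁.2, h₂.2, h₃.2]
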